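/- The map (f,T,g) ↦ Λ_{f,T,g} is upper semi-continuous from 𝓖 = {(f,T,g) : f ∈ 𝓒^1, T ∈ 𝓔^1, g a Lipschitz calibrated sub-action of (f,T)} (topologized as a subspace of 𝓒^1 × 𝓔^1 × 𝓒^0) into the space of nonempty compact subsets of ℝ/ℤ. -/

import Mathlib

/-!
The value `β(f,T)` enters only through the function `h = g + f - g ∘ T`: the sub-action
inequality says `h ≤ β(f,T)`, and calibration says that this value is attained, so `E_{f,T,g}` is
the set of maximum points of `h`. Under the convergence `(fₙ,Tₙ,gₙ) → (f,T,g)` all three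
components converge uniformly on the circle, to continuous limits. Hence, if `uₙ → u` with
`uₙ ∈ Eₙ`, the inequalities `hₙ(y) ≤ hₙ(uₙ)` pass to the limit and `u ∈ E` (`mem_Eset_of_tendsto`);
no continuity of `β` is needed. As `Tₙ^k uₙ → T^k u` for each `k` (`tendsto_iterate_comp`), limits
of points of `Λ*ₙ` lie in `Λ*`. Finally, if `xₙ = Tₙ^m yₙ` with `yₙ ∈ Λ*ₙ`, compactness of the
circle gives a limit `y` of the `yₙ` along an ultrafilter finer than `atTop`, and then `y ∈ Λ*` and
`T^m y = x₀`.
-/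

open MeasureTheory Topology Filter Set
open scoped UniformConvergence

noncomputable section

/-- The circle `ℝ/ℤ`. -/
abbrev Circle1 : Type := AddCircle (1 : ℝ)

/-- The canonical representative in `[0,1)` of a point of `ℝ/ℤ`. -/
noncomputable def rep (z : Circle1) : ℝ := (AddCircle.equivIco 1 0 z : ℝ)

/-- The circle map induced by a lift `F : ℝ → ℝ`. -/
noncomputable def cmap (F : ℝ → ℝ) : Circle1 → Circle1 := fun z => ((F (rep z) : ℝ) : Circle1)

/-- The data determining the `C^r` topology: all derivatives of order `≤ r`, viewed in the
space of functions `ℝ → ℝ` with the uniform-convergence topology. -/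
noncomputable def crSeq (r : ℕ∞) (f : ℝ → ℝ) : ℕ → (ℝ →ᵤ ℝ) :=
  fun k => UniformFun.ofFun (if (k : ℕ∞) ≤ r then iteratedDeriv k f else 0)

/-- The space `𝓒^r` of `C^r` functions `ℝ/ℤ → ℝ`. -/
def CrFun (r : ℕ∞) : Type := {f : Circle1 → ℝ // ContDiff ℝ r fun x : ℝ => f ↑x}

/-- The `C^r` topology on `𝓒^r`. -/
noncomputable instance (r : ℕ∞) : TopologicalSpace (CrFun r) :=
  TopologicalSpace.induced (fun f : CrFun r => crSeq r fun x : ℝ => f.1 ↑x) inferInstance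

/-- `F : ℝ → ℝ` is a lift of a `C^r` expanding circle map: it is `C^r`, sends `x+1` to
`F x + d` for a fixed integer `d`, and `|(Fⁿ)'| ≥ C λⁿ` for some `C > 0`, `λ > 1`. -/
def ExpandingLift (r : ℕ∞) (F : ℝ → ℝ) : Prop :=
  ContDiff ℝ r F ∧ (∃ d : ℤ, ∀ x : ℝ, F (x + 1) = F x + d) ∧
    ∃ C > (0 : ℝ), ∃ l > (1 : ℝ), ∀ n : ℕ, 1 ≤ n → ∀ x : ℝ, C * l ^ n ≤ |deriv (F^[n]) x|

/-- The space `𝓔^r` of (lifts of) `C^r` expanding circle maps, with the `C^r` topology. -/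
def ExpMap (r : ℕ∞) : Type := {F : ℝ → ℝ // ExpandingLift r F}

noncomputable instance (r : ℕ∞) : TopologicalSpace (ExpMap r) :=
  TopologicalSpace.induced (fun F : ExpMap r => crSeq r F.1) inferInstance

/-- `μ` is a `T`-invariant Borel probability measure. -/
def InvProb (T : Circle1 → Circle1) (μ : Measure Circle1) : Prop :=
  IsProbabilityMeasure μ ∧ μ.map T = μ

/-- `β(f,T)`, the maximal ergodic average. -/
noncomputable def beta (f : Circle1 → ℝ) (T : Circle1 → Circle1) : ℝ :=
  sSup ((fun μ : Measure Circle1 => ∫ x, f x ∂μ) '' {μ | InvProb T μ})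

/-- `μ` is a maximizing measure for `(f,T)`. -/
def IsMaximizing (f : Circle1 → ℝ) (T : Circle1 → Circle1) (μ : Measure Circle1) : Prop :=
  InvProb T μ ∧ ∫ x, f x ∂μ = beta f T

/-- `μ` is a periodic measure: an invariant measure supported on a periodic orbit. -/
def IsPeriodicMeasure (T : Circle1 → Circle1) (μ : Measure Circle1) : Prop :=
  InvProb T μ ∧ ∃ x : Circle1, ∃ n : ℕ, 0 < n ∧ T^[n] x = x ∧
    μ (Set.range fun k : ℕ => T^[k] x) = 1

/-- `(f,T)` is uniquely maximized by a periodic measure. -/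
def UniqMaxPeriodic (f : Circle1 → ℝ) (T : Circle1 → Circle1) : Prop :=
  ∃ μ : Measure Circle1, IsMaximizing f T μ ∧ IsPeriodicMeasure T μ ∧
    ∀ ν : Measure Circle1, IsMaximizing f T ν → ν = μ

/-- A (continuous) sub-action for `(f,T)`. -/
def IsSubaction (f : Circle1 → ℝ) (T : Circle1 → Circle1) (g : Circle1 → ℝ) : Prop :=
  Continuous g ∧ ∀ x, g x + f x ≤ g (T x) + beta f T

/-- A calibrated sub-action for `(f,T)`. -/
def IsCalibrated (f : Circle1 → ℝ) (T : Circle1 → Circle1) (g : Circle1 → ℝ) : Prop :=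
  IsSubaction f T g ∧ ∀ x, ∃ y, T y = x ∧ g y + f y = g x + beta f T

/-- `G_{f,T}`: the set of Lipschitz calibrated sub-actions of `(f,T)`. -/
def Gset (f : Circle1 → ℝ) (T : Circle1 → Circle1) : Set (Circle1 → ℝ) :=
  {g | (∃ K : NNReal, LipschitzWith K g) ∧ IsCalibrated f T g}

/-- The set `E_{f,T,g}`. -/
def Eset (f : Circle1 → ℝ) (T : Circle1 → Circle1) (g : Circle1 → ℝ) : Set Circle1 :=
  {x | g x + f x = g (T x) + beta f T}

/-- The set `Λ*_{f,T,g}`. -/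
def LambdaStar (f : Circle1 → ℝ) (T : Circle1 → Circle1) (g : Circle1 → ℝ) : Set Circle1 :=
  {x | ∀ n : ℕ, T^[n] x ∈ Eset f T g}

/-- The set `Λ_{f,T,g}`. -/
def Lambda (f : Circle1 → ℝ) (T : Circle1 → Circle1) (g : Circle1 → ℝ) : Set Circle1 :=
  ⋂ n : ℕ, T^[n] '' LambdaStar f T g

/-- The set `K(f,T)`. -/
def Kset (f : Circle1 → ℝ) (T : Circle1 → Circle1) : Set Circle1 :=
  ⋃ g ∈ Gset f T, Lambda f T g

/-- The `(f,T)`-non-wandering set `Ω(f,T)`. -/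
def OmegaSet (f : Circle1 → ℝ) (T : Circle1 → Circle1) : Set Circle1 :=
  {x | ∀ ε > (0 : ℝ), ∃ n : ℕ, 1 ≤ n ∧ ∃ z : Circle1, T^[n] z = x ∧ dist z x < ε ∧
    |∑ i ∈ Finset.range n, (f (T^[i] z) - beta f T)| < ε}

/-- `A` is a periodic orbit of `T`. -/
def IsPeriodicOrbit (T : Circle1 → Circle1) (A : Set Circle1) : Prop :=
  ∃ x : Circle1, (∃ n : ℕ, 0 < n ∧ T^[n] x = x) ∧ A = Set.range fun k : ℕ => T^[k] x

/-- `A` is a `T`-minimal set: a nonempty compact invariant set with no proper nonempty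
compact invariant subset. -/
def IsMinimalSet (T : Circle1 → Circle1) (A : Set Circle1) : Prop :=
  A.Nonempty ∧ IsCompact A ∧ T '' A ⊆ A ∧
    ∀ B ⊆ A, B.Nonempty → IsCompact B → T '' B ⊆ B → B = A

/-- The space of `C^r` families of functions on the circle with `q` parameters,
i.e. maps `(t,x) ↦ f_t(x)` that are jointly `C^r` (the circle variable via a lift). -/
def FamFun (r : ℕ∞) (q : ℕ) : Type :=
  {G : ((Fin q → ℝ) × ℝ) → ℝ // ContDiff ℝ r G ∧ ∀ t x, G (t, x + 1) = G (t, x)}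

noncomputable def famSeq (r : ℕ∞) (q : ℕ) (G : ((Fin q → ℝ) × ℝ) → ℝ) :
    (k : ℕ) → (((Fin q → ℝ) × ℝ) →ᵤ (((Fin q → ℝ) × ℝ) [×k]→L[ℝ] ℝ)) :=
  fun k => UniformFun.ofFun (if (k : ℕ∞) ≤ r then iteratedFDeriv ℝ k G else 0)

/-- The `C^r` topology on the space of `C^r` families. -/
noncomputable instance (r : ℕ∞) (q : ℕ) : TopologicalSpace (FamFun r q) :=
  TopologicalSpace.induced (fun G : FamFun r q => famSeq r q G.1) inferInstance

/-- The member `f_t : ℝ/ℤ → ℝ` of a family, at the parameter `t`. -/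
noncomputable def famMem {r : ℕ∞} {q : ℕ} (G : FamFun r q) (t : Fin q → ℝ) : Circle1 → ℝ :=
  fun z => G.1 (t, rep z)

/-- The product `m_∞` over `ℕ` of Lebesgue measure on `[0,1]`, realised as the pushforward of
the Haar probability measure of the compact group `(ℝ/ℤ)^ℕ` under the coordinatewise choice of
representatives in `[0,1)`. -/
noncomputable def mInfty : Measure (ℕ → ℝ) :=
  Measure.map (fun (t : ℕ → Circle1) (n : ℕ) => rep (t n))
    (MeasureTheory.Measure.addHaarMeasure (⊤ : TopologicalSpace.PositiveCompacts (ℕ → Circle1)))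

/-- `S` is an `N`-dimensionally shy subset of a normed real vector space `V`. -/
def NDimShy {V : Type*} [NormedAddCommGroup V] [NormedSpace ℝ V] (N : ℕ) (S : Set V) : Prop :=
  ∃ φ : Fin N → V, ∀ f : V,
    volume {t : Fin N → ℝ | (∀ i, t i ∈ Set.Icc (0 : ℝ) 1) ∧ f + ∑ i, t i • φ i ∈ S} = 0

/-- `S` is a finite dimensionally shy subset of a normed real vector space `V`. -/
def FinDimShy {V : Type*} [NormedAddCommGroup V] [NormedSpace ℝ V] (S : Set V) : Prop :=
  ∃ N : ℕ, 0 < N ∧ NDimShy N S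

/-- `S` is a shy subset of `V`: there are a compactly supported Borel probability measure `μ`
on `V` and a Borel set `S̃ ⊇ S` all of whose translates are `μ`-null. -/
def IsShy {V : Type*} [NormedAddCommGroup V] [NormedSpace ℝ V] (S : Set V) : Prop :=
  letI : MeasurableSpace V := borel V
  ∃ μ : Measure V, μ Set.univ = 1 ∧ (∃ K : Set V, IsCompact K ∧ μ K = 1) ∧
    ∃ St : Set V, MeasurableSet St ∧ S ⊆ St ∧
      ∀ v : V, μ ((fun x => x + v) ⁻¹' St) = 0

/-- `S` is a prevalent subset of `V`. -/
def IsPrevalent {V : Type*} [NormedAddCommGroup V] [NormedSpace ℝ V] (S : Set V) : Prop :=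
  IsShy Sᶜ

/-- `F` is the (normalized) lift of an orientation-preserving real analytic expanding circle
map of degree `d` fixing `π(0)`. -/
def AnalyticExpandingLift (F : ℝ → ℝ) (d : ℕ) : Prop :=
  (∀ x : ℝ, AnalyticAt ℝ F x) ∧ (∀ x : ℝ, F (x + 1) = F x + d) ∧ StrictMono F ∧ F 0 = 0 ∧
    2 ≤ d ∧ ∃ C > (0 : ℝ), ∃ l > (1 : ℝ), ∀ n : ℕ, 1 ≤ n → ∀ x : ℝ, C * l ^ n ≤ |deriv (F^[n]) x|

/-- The inverse branches `τ_{i,n} = τ_{i_n} ∘ ⋯ ∘ τ_{i_1}`, where `τ = F⁻¹` and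
`τ_i(x) = τ(x+i)`; the word `i` is indexed from `0`, so `i 0` is the first letter `i_1`. -/
noncomputable def tauIter (F : ℝ → ℝ) {d : ℕ} (i : ℕ → Fin d) : ℕ → ℝ → ℝ
  | 0, x => x
  | n + 1, x => Function.invFun F (tauIter F i n x + ((i n : ℕ) : ℝ))

/-- The function `h^f_i` associated to an infinite word `i`. -/
noncomputable def hSum (F : ℝ → ℝ) {d : ℕ} (i : ℕ → Fin d) (f : Circle1 → ℝ) : ℝ → ℝ :=
  fun x => ∑' n : ℕ,
    (f ((tauIter F i (n + 1) x : ℝ) : Circle1) - f ((tauIter F i (n + 1) 0 : ℝ) : Circle1))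

/-- The function `h^f_i` associated to a finite word of length `m` (the first `m` letters
of `i`). -/
noncomputable def hSumFin (F : ℝ → ℝ) {d : ℕ} (i : ℕ → Fin d) (m : ℕ) (f : Circle1 → ℝ) :
    ℝ → ℝ :=
  fun x => ∑ n ∈ Finset.range m,
    (f ((tauIter F i (n + 1) x : ℝ) : Circle1) - f ((tauIter F i (n + 1) 0 : ℝ) : Circle1))

/-- `i ∈ CL(x,K)`: all backward images of `x` along the word `i` lie over `K`. -/
def WordIn (F : ℝ → ℝ) {d : ℕ} (i : ℕ → Fin d) (x : ℝ) (K : Set Circle1) : Prop :=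
  ∀ n : ℕ, 1 ≤ n → ((tauIter F i n x : ℝ) : Circle1) ∈ K

/-- `x` (a real, lying over `K`) is an `f`-supercritical value of `K`. -/
def IsSupercriticalValue (F : ℝ → ℝ) (d : ℕ) (f : Circle1 → ℝ) (K : Set Circle1) (x : ℝ) :
    Prop :=
  ((x : ℝ) : Circle1) ∈ K ∧ ∃ i j : ℕ → Fin d, WordIn F i x K ∧ WordIn F j x K ∧ i 0 ≠ j 0 ∧
    deriv (hSum F i f) x = deriv (hSum F j f) x

/-- `x` is a critical value of `T|K`. -/
def IsCriticalValue (T : Circle1 → Circle1) (K : Set Circle1) (x : Circle1) : Prop :=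
  x ∈ K ∧ ∃ y z, y ∈ K ∧ z ∈ K ∧ y ≠ z ∧ T y = x ∧ T z = x

/-- A critical value `x` of `T|K` is regular: on each side of `x` there is a continuous
inverse branch of `T` selecting the unique preimage in `K`. -/
def IsRegularCriticalValue (T : Circle1 → Circle1) (K : Set Circle1) (x : Circle1) : Prop :=
  ∃ U : Set Circle1, U ∈ 𝓝 x ∧ IsConnected U ∧
    ∀ b ∈ U \ {x}, ∃ s : Circle1 → Circle1,
      ContinuousOn s (connectedComponentIn (U \ {x}) b) ∧
      (∀ y ∈ connectedComponentIn (U \ {x}) b, T (s y) = y) ∧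
      (∀ y ∈ K ∩ connectedComponentIn (U \ {x}) b, T ⁻¹' {y} ∩ K = {s y})

/-- `T|K` is Sturmian-like: every critical value is regular. -/
def SturmianLike (T : Circle1 → Circle1) (K : Set Circle1) : Prop :=
  ∀ x, IsCriticalValue T K x → IsRegularCriticalValue T K x

/-- `f : ℝ/ℤ → ℝ` is a trigonometric polynomial. -/
def IsTrigPoly (f : Circle1 → ℝ) : Prop :=
  ∃ m : ℕ, ∃ a b : ℕ → ℝ, ∀ x : ℝ,
    f ↑x = a 0 + ∑ k ∈ Finset.range m,
      (a (k + 1) * Real.cos (2 * Real.pi * (k + 1) * x) +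
        b (k + 1) * Real.sin (2 * Real.pi * (k + 1) * x))

end

/-- `cmap F` is induced by `F` on the quotient; the representative chosen by `rep` is irrelevant
because `F (x + 1) - F x` is an integer. -/
lemma cmap_coe {F : ℝ → ℝ} {d : ℤ} (hd : ∀ x, F (x + 1) = F x + d) (x : ℝ) :
    cmap F (x : Circle1) = (F x : Circle1) := by
  -- `F (t + 1)` and `F t` have the same class, so the class of `F` factors through `ℝ/ℤ`.
  have hper : Function.Periodic (fun t : ℝ => (F t : Circle1)) 1 := by
    intro t
    simp [hd]
  have h1 : ((rep (x : Circle1) : ℝ) : Circle1) = (x : Circle1) := AddCircle.coe_equivIco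
  have h2 := congrArg hper.lift h1
  simpa [cmap] using h2

lemma continuous_cmap {F : ℝ → ℝ} (hF : ExpandingLift 1 F) : Continuous (cmap F) := by
  obtain ⟨hc, ⟨d, hd⟩, -⟩ := hF
  refine (QuotientAddGroup.isQuotientMap_mk (AddSubgroup.zmultiples (1 : ℝ))).continuous_iff.2 ?_
  have h : (cmap F ∘ fun x : ℝ => (x : Circle1)) = fun x : ℝ => (F x : Circle1) :=
    funext fun x => cmap_coe hd x
  exact h ▸ (AddCircle.continuous_mk' 1).comp hc.continuous

lemma continuous_crFun (f : CrFun 1) : Continuous f.1 :=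
  (QuotientAddGroup.isQuotientMap_mk (AddSubgroup.zmultiples (1 : ℝ))).continuous_iff.2
    f.2.continuous

lemma tendstoUniformly_of_crSeq {ι : Type*} {p : Filter ι} {r : ℕ∞} {F : ι → ℝ → ℝ} {G : ℝ → ℝ}
    (h : Tendsto (fun i => crSeq r (F i)) p (𝓝 (crSeq r G))) : TendstoUniformly F G p := by
  have h0 := UniformFun.tendsto_iff_tendstoUniformly.1 ((tendsto_pi_nhds.1 h) 0)
  simpa [crSeq, Function.comp_def] using h0

lemma tendstoUniformly_crFun {ι : Type*} {p : Filter ι} {f : ι → CrFun 1} {f0 : CrFun 1}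
    (h : Tendsto f p (𝓝 f0)) : TendstoUniformly (fun i => (f i).1) f0.1 p := by
  have h1 := tendstoUniformly_of_crSeq ((continuous_induced_dom.tendsto f0).comp h)
  have h2 := h1.comp rep
  have h3 : ∀ z : Circle1, ((rep z : ℝ) : Circle1) = z := fun z => AddCircle.coe_equivIco
  simpa [Function.comp_def, h3] using h2

lemma tendstoUniformly_cmap {ι : Type*} {p : Filter ι} {F : ι → ExpMap 1} {F0 : ExpMap 1}
    (h : Tendsto F p (𝓝 F0)) : TendstoUniformly (fun i => cmap (F i).1) (cmap F0.1) p := by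
  have h1 := tendstoUniformly_of_crSeq ((continuous_induced_dom.tendsto F0).comp h)
  have hu : UniformContinuous (fun x : ℝ => (x : Circle1)) :=
    uniformContinuous_addMonoidHom_of_continuous
      (f := QuotientAddGroup.mk' (AddSubgroup.zmultiples (1 : ℝ))) (AddCircle.continuous_mk' 1)
  exact hu.comp_tendstoUniformly (h1.comp rep)

lemma tendsto_iterate_comp {ι : Type*} {p : Filter ι} {T : ι → Circle1 → Circle1}
    {T0 : Circle1 → Circle1} (hT : TendstoUniformly T T0 p) (hT0 : Continuous T0)
    {u : ι → Circle1} {u0 : Circle1} (hu : Tendsto u p (𝓝 u0)) (k : ℕ) :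
    Tendsto (fun i => (T i)^[k] (u i)) p (𝓝 (T0^[k] u0)) := by
  induction k with
  | zero => simpa using hu
  | succ k ih =>
    simp only [Function.iterate_succ_apply']
    exact hT.tendsto_comp hT0.continuousAt ih

/-- Upper semi-continuity of `E`: its points are the maximum points of `g + f - g ∘ T`, and
maximum points persist under uniform limits. -/
lemma mem_Eset_of_tendsto {ι : Type*} {p : Filter ι} [p.NeBot]
    {f g : ι → Circle1 → ℝ} {T : ι → Circle1 → Circle1} {f0 g0 : Circle1 → ℝ}
    {T0 : Circle1 → Circle1}
    (hf : TendstoUniformly f f0 p) (hf0 : Continuous f0)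
    (hT : TendstoUniformly T T0 p) (hT0 : Continuous T0)
    (hg : TendstoUniformly g g0 p)
    (hsub : ∀ i, IsSubaction (f i) (T i) (g i)) (hcal : IsCalibrated f0 T0 g0)
    {u : ι → Circle1} {u0 : Circle1} (hu : Tendsto u p (𝓝 u0))
    (huE : ∀ i, u i ∈ Eset (f i) (T i) (g i)) : u0 ∈ Eset f0 T0 g0 := by
  have hg0 : Continuous g0 := hcal.1.1
  have hlim : ∀ {v : ι → Circle1} {v0 : Circle1}, Tendsto v p (𝓝 v0) →
      Tendsto (fun i => g i (v i) + f i (v i) - g i (T i (v i))) p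
        (𝓝 (g0 v0 + f0 v0 - g0 (T0 v0))) := fun hv =>
    ((hg.tendsto_comp hg0.continuousAt hv).add (hf.tendsto_comp hf0.continuousAt hv)).sub
      (hg.tendsto_comp hg0.continuousAt (hT.tendsto_comp hT0.continuousAt hv))
  -- Calibration provides a point `y` where the limit function attains `β`.
  obtain ⟨y, hy, hyE⟩ := hcal.2 (T0 u0)
  have hle : g0 y + f0 y - g0 (T0 y) ≤ g0 u0 + f0 u0 - g0 (T0 u0) := by
    refine le_of_tendsto_of_tendsto' (hlim (tendsto_const_nhds (x := y))) (hlim hu) fun i => ?_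
    have h1 := (hsub i).2 y
    have h2 : g i (u i) + f i (u i) = g i (T i (u i)) + beta (f i) (T i) := huE i
    linarith
  have h3 := hcal.1.2 u0
  rw [hy] at hle
  show g0 u0 + f0 u0 = g0 (T0 u0) + beta f0 T0
  linarith

/-- Proposition 2.1(i): the map `(f,T,g) ↦ Λ_{f,T,g}` is upper semi-continuous on `𝓖`. -/
theorem lambda_usc
    (seq : ℕ → CrFun 1 × ExpMap 1 × C(Circle1, ℝ))
    (lim : CrFun 1 × ExpMap 1 × C(Circle1, ℝ))
    (hseq : ∀ n, ((seq n).2.2 : Circle1 → ℝ) ∈ Gset (seq n).1.1 (cmap (seq n).2.1.1))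
    (hlim : (lim.2.2 : Circle1 → ℝ) ∈ Gset lim.1.1 (cmap lim.2.1.1))
    (hconv : Tendsto seq atTop (𝓝 lim))
    (x : ℕ → Circle1) (x0 : Circle1)
    (hx : ∀ n, x n ∈ Lambda (seq n).1.1 (cmap (seq n).2.1.1) ((seq n).2.2 : Circle1 → ℝ))
    (hxc : Tendsto x atTop (𝓝 x0)) :
    x0 ∈ Lambda lim.1.1 (cmap lim.2.1.1) (lim.2.2 : Circle1 → ℝ) := by
  obtain ⟨hc1, hc2⟩ := (Prod.tendsto_iff _ _).1 hconv
  obtain ⟨hc2, hc3⟩ := (Prod.tendsto_iff _ _).1 hc2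
  have hf := tendstoUniformly_crFun hc1
  have hT := tendstoUniformly_cmap hc2
  have hg := ContinuousMap.tendsto_iff_tendstoUniformly.1 hc3
  have hf0 := continuous_crFun lim.1
  have hT0 := continuous_cmap lim.2.1.2
  refine mem_iInter.2 fun m => ?_
  choose y hy hyx using fun n => mem_iInter.1 (hx n) m
  -- Compactness: the preimages `y n` converge along a free ultrafilter on `ℕ`.
  let U : Ultrafilter ℕ := hyperfilter ℕ
  have hU : (U : Filter ℕ) ≤ atTop := Nat.hyperfilter_le_atTop
  obtain ⟨y0, -, hy0⟩ := isCompact_univ.ultrafilter_le_nhds (U.map y) (by simp)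
  have hyU : Tendsto y U (𝓝 y0) := hy0
  have hfU : TendstoUniformly _ _ (U : Filter ℕ) := fun v hv => hU (hf v hv)
  have hTU : TendstoUniformly _ _ (U : Filter ℕ) := fun v hv => hU (hT v hv)
  have hgU : TendstoUniformly _ _ (U : Filter ℕ) := fun v hv => hU (hg v hv)
  refine ⟨y0, fun k => ?_, ?_⟩
  · exact mem_Eset_of_tendsto hfU hf0 hTU hT0 hgU (fun n => (hseq n).2.1) hlim.2
      (tendsto_iterate_comp hTU hT0 hyU k) (fun n => hy n k)
  · refine tendsto_nhds_unique (tendsto_iterate_comp hTU hT0 hyU m) ?_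
    exact (hxc.mono_left hU).congr fun n => (hyx n).symm
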